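/- For Leontief utilities, a strategy profile (delta_i)_{i in N} is a Nash equilibrium if and only if for each agent i, supp(delta_i) is contained in the set T_{delta,i} of i's critical alternatives, where delta is the aggregate distribution. -/

import Mathlib

def IsStrategy (n m : ℕ) (d : Fin m → ℝ) : Prop :=
  (∀ x, 0 ≤ d x) ∧ ∑ x, d x = 1 / n

def IsNash (n m : ℕ) (u : Fin n → (Fin m → ℝ) → ℝ) (δ : Fin n → Fin m → ℝ) : Prop :=
  (∀ i, IsStrategy n m (δ i)) ∧
  ∀ i, ∀ d, IsStrategy n m d →
    u i ((∑ j, δ j) - δ i + d) ≤ u i (∑ j, δ j)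

/-- Alternatives valued positively by agent `i`. -/
noncomputable def Apos {n m : ℕ} (v : Fin n → Fin m → ℝ) (i : Fin n) : Finset (Fin m) :=
  Finset.univ.filter (fun x => 0 < v i x)

/-- Leontief utility of agent `i`. -/
noncomputable def leontief {n m : ℕ} (v : Fin n → Fin m → ℝ)
    (h : ∀ i, (Apos v i).Nonempty) (i : Fin n) (d : Fin m → ℝ) : ℝ :=
  (Apos v i).inf' (h i) (fun x => d x / v i x)

/-- Critical alternatives of agent `i` under distribution `d`. -/
noncomputable def critical {n m : ℕ} (v : Fin n → Fin m → ℝ)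
    (h : ∀ i, (Apos v i).Nonempty) (i : Fin n) (d : Fin m → ℝ) : Finset (Fin m) :=
  (Apos v i).filter (fun x => d x / v i x = leontief v h i d)

/-!
If an agent contributes only to critical alternatives, any reallocation of her budget must leave
some alternative that she currently supports with no more than before; that alternative is
critical, so the bottleneck of her utility does not improve. Conversely, if she contributes to a
noncritical alternative, she can withdraw a small amount from it without lowering her utility and
spread this amount evenly over all alternatives, which raises every ratio in the Leontief minimum.
-/

theorem exists_pos_and_le_of_sum_le {ι M : Type*} [AddCommMonoid M] [LinearOrder M]
    [IsOrderedCancelAddMonoid M] {s : Finset ι} {f g : ι → M} (hg : ∀ i ∈ s, 0 ≤ g i)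
    (hf : 0 < ∑ i ∈ s, f i) (hgf : ∑ i ∈ s, g i ≤ ∑ i ∈ s, f i) :
    ∃ i ∈ s, 0 < f i ∧ g i ≤ f i := by
  by_contra! hlt
  obtain ⟨j, hj, hfj⟩ : ∃ j ∈ s, 0 < f j :=
    Finset.exists_lt_of_sum_lt (by simpa only [Finset.sum_const_zero] using hf)
  have hle : ∀ i ∈ s, f i ≤ g i := fun i hi =>
    (le_or_gt (f i) 0).elim (fun h => h.trans (hg i hi)) fun h => (hlt i hi h).le
  exact hgf.not_gt (Finset.sum_lt_sum hle ⟨j, hj, hlt j hj hfj⟩)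

section Reallocate

variable {ι K : Type*} [Fintype ι] [DecidableEq ι] [Field K]

/-- The distribution obtained from `d` by withdrawing `ε` from `x` and spreading it evenly over all
alternatives, `x` included. -/
def reallocate (d : ι → K) (x : ι) (ε : K) : ι → K :=
  d - Pi.single x ε + Function.const ι (ε / Fintype.card ι)

theorem sum_reallocate [CharZero K] (d : ι → K) (x : ι) (ε : K) :
    ∑ y, reallocate d x ε y = ∑ y, d y := by
  have : Nonempty ι := ⟨x⟩
  have hcard : (Fintype.card ι : K) ≠ 0 := Nat.cast_ne_zero.mpr Fintype.card_ne_zero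
  simp [reallocate, Finset.sum_add_distrib, Finset.sum_sub_distrib, mul_div_cancel₀ _ hcard]

variable [LinearOrder K] [IsStrictOrderedRing K]

theorem sub_single_lt_reallocate (d : ι → K) (x y : ι) {ε : K} (hε : 0 < ε) :
    (d - Pi.single x ε : ι → K) y < reallocate d x ε y := by
  have : Nonempty ι := ⟨x⟩
  exact lt_add_of_pos_right _ (div_pos hε (Nat.cast_pos.mpr Fintype.card_pos))

theorem reallocate_nonneg {d : ι → K} (hd : ∀ y, 0 ≤ d y) {x : ι} {ε : K} (hε : 0 ≤ ε)
    (hεx : ε ≤ d x) (y : ι) : 0 ≤ reallocate d x ε y := by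
  have hsingle : Pi.single x ε ≤ d := update_le_iff.mpr ⟨hεx, fun z _ => hd z⟩
  exact add_nonneg (sub_nonneg.mpr (hsingle y)) (div_nonneg hε (Nat.cast_nonneg _))

end Reallocate

section Leontief

variable {n m : ℕ} {v : Fin n → Fin m → ℝ} {h : ∀ i, (Apos v i).Nonempty} {i : Fin n}
  {d e : Fin m → ℝ} {x : Fin m}

theorem mem_Apos : x ∈ Apos v i ↔ 0 < v i x := by
  simp only [Apos, Finset.mem_filter, Finset.mem_univ, true_and]

theorem mem_critical :
    x ∈ critical v h i d ↔ x ∈ Apos v i ∧ d x / v i x = leontief v h i d :=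
  Finset.mem_filter

theorem leontief_le_div (hx : x ∈ Apos v i) : leontief v h i d ≤ d x / v i x :=
  Finset.inf'_le (fun y => d y / v i y) hx

theorem leontief_lt_leontief (hde : ∀ y ∈ Apos v i, d y < e y) :
    leontief v h i d < leontief v h i e :=
  (Finset.lt_inf'_iff _).mpr fun y hy =>
    (leontief_le_div hy).trans_lt (div_lt_div_of_pos_right (hde y hy) (mem_Apos.mp hy))

theorem leontief_le_leontief_of_mem_critical (hx : x ∈ critical v h i d) (hed : e x ≤ d x) :
    leontief v h i e ≤ leontief v h i d := by
  obtain ⟨hxA, hxd⟩ := mem_critical.mp hx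
  calc leontief v h i e ≤ e x / v i x := leontief_le_div hxA
    _ ≤ d x / v i x := div_le_div_of_nonneg_right hed (mem_Apos.mp hxA).le
    _ = leontief v h i d := hxd

theorem leontief_mul_lt_of_notMem_critical (hxA : x ∈ Apos v i) (hx : x ∉ critical v h i d) :
    leontief v h i d * v i x < d x :=
  (lt_div_iff₀ (mem_Apos.mp hxA)).mp <|
    (leontief_le_div hxA).lt_of_ne fun heq => hx (mem_critical.mpr ⟨hxA, heq.symm⟩)

theorem leontief_le_leontief_sub_single {ε : ℝ}
    (hε : x ∈ Apos v i → leontief v h i d * v i x ≤ d x - ε) :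
    leontief v h i d ≤ leontief v h i (d - Pi.single x ε) := by
  refine Finset.le_inf' _ _ fun y hy => ?_
  obtain rfl | hyx := eq_or_ne y x
  · rw [Pi.sub_apply, Pi.single_eq_same]
    exact (le_div_iff₀ (mem_Apos.mp hy)).mpr (hε hy)
  · rw [Pi.sub_apply, Pi.single_eq_of_ne hyx, sub_zero]
    exact leontief_le_div hy

theorem exists_leontief_le_leontief_sub_single (hx : x ∉ critical v h i d) {b : ℝ} (hb : 0 < b) :
    ∃ ε, 0 < ε ∧ ε ≤ b ∧ leontief v h i d ≤ leontief v h i (d - Pi.single x ε) := by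
  by_cases hxA : x ∈ Apos v i
  · have hslack : 0 < d x - leontief v h i d * v i x :=
      sub_pos.mpr (leontief_mul_lt_of_notMem_critical hxA hx)
    exact ⟨min b (d x - leontief v h i d * v i x), lt_min hb hslack, min_le_left _ _,
      leontief_le_leontief_sub_single fun _ => le_sub_comm.mp (min_le_right _ _)⟩
  · exact ⟨b, hb, le_rfl, leontief_le_leontief_sub_single fun hxA' => absurd hxA' hxA⟩

theorem leontief_add_le_of_support_critical {a : Fin m → ℝ}
    (hcrit : ∀ x, 0 < d x → x ∈ critical v h i (a + d)) (hd : 0 < ∑ x, d x)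
    (he : ∀ x, 0 ≤ e x) (hsum : ∑ x, e x ≤ ∑ x, d x) :
    leontief v h i (a + e) ≤ leontief v h i (a + d) := by
  obtain ⟨x, -, hdx, hex⟩ := exists_pos_and_le_of_sum_le (fun x _ => he x) hd hsum
  exact leontief_le_leontief_of_mem_critical (hcrit x hdx) (add_le_add_right hex (a x))

theorem exists_leontief_add_lt_of_notMem_critical {a : Fin m → ℝ} (hd : ∀ y, 0 ≤ d y)
    (hdx : 0 < d x) (hx : x ∉ critical v h i (a + d)) :
    ∃ e : Fin m → ℝ, (∀ y, 0 ≤ e y) ∧ ∑ y, e y = ∑ y, d y ∧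
      leontief v h i (a + d) < leontief v h i (a + e) := by
  obtain ⟨ε, hε, hεx, hwithdraw⟩ := exists_leontief_le_leontief_sub_single hx hdx
  refine ⟨reallocate d x ε, reallocate_nonneg hd hε.le hεx, sum_reallocate d x ε, ?_⟩
  refine hwithdraw.trans_lt (leontief_lt_leontief fun y _ => ?_)
  rw [add_sub_assoc]
  exact add_lt_add_right (sub_single_lt_reallocate d x y hε) (a y)

theorem IsStrategy.sum_pos (i : Fin n) (hd : IsStrategy n m d) : 0 < ∑ x, d x := by
  rw [hd.2]
  exact one_div_pos.mpr (Nat.cast_pos.mpr i.pos)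

theorem leontief_bestResponse_iff_support_critical (hd : IsStrategy n m d) (a : Fin m → ℝ) :
    (∀ e, IsStrategy n m e → leontief v h i (a + e) ≤ leontief v h i (a + d)) ↔
      ∀ x, 0 < d x → x ∈ critical v h i (a + d) := by
  refine ⟨fun hbest x hdx => ?_, fun hcrit e he => ?_⟩
  · by_contra hx
    obtain ⟨e, he, hsum, hlt⟩ := exists_leontief_add_lt_of_notMem_critical hd.1 hdx hx
    exact (hbest e ⟨he, hsum.trans hd.2⟩).not_gt hlt
  · exact leontief_add_le_of_support_critical hcrit (hd.sum_pos i) he.1 (he.2.trans hd.2.symm).le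

end Leontief

/-- with Leontief utilities, a profile is a Nash equilibrium iff
each agent contributes only to her critical alternatives. -/
theorem leontief_nash_iff_support_critical
    (n m : ℕ) (hn : 0 < n)
    (v : Fin n → Fin m → ℝ) (hv : ∀ i x, 0 ≤ v i x)
    (hpos : ∀ i, (Apos v i).Nonempty)
    (δ : Fin n → Fin m → ℝ) :
    IsNash n m (leontief v hpos) δ ↔
      (∀ i, IsStrategy n m (δ i)) ∧
      (∀ i, ∀ x, 0 < δ i x → x ∈ critical v hpos i (∑ j, δ j)) := by
  refine and_congr_right fun hδ => forall_congr' fun i => ?_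
  simpa only [sub_add_cancel] using
    leontief_bestResponse_iff_support_critical (h := hpos) (hδ i) ((∑ j, δ j) - δ i)
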